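/- For every RAI instance with J nonempty, define L = max( max_{j∈J} p_j , max_{0 ≤ ℓ ≤ r < m} p(J(ℓ,r))/(r−ℓ+1) ). Then: (i) every feasible schedule σ satisfies C_max(σ) ≥ L; and (ii) there exists a feasible schedule in which every machine has load at most L + max_{j∈J} p_j. In particular, there exists a feasible schedule whose makespan is at most twice the minimum makespan over all feasible schedules. -/

import Mathlib

/-! The lower bound `L ≤ C_max(σ)` is an averaging argument: a job runs on one machine, and the jobs
of `J(ℓ,r)` all run on the `r - ℓ + 1` machines of `M(ℓ,r)`.

For the upper bound, let `P = max p_j` and fill the machines greedily from left to right. Machine `k`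
receives a set `S` of unassigned jobs with `lo j ≤ k`, closed downwards for the deadline `hi j`, that
is maximal with load at most `L + P`. Maximality gives a dichotomy for every deadline `d`
(`exists_greedy_batch`): either `S` exhausts the available jobs with deadline at most `d`, or `S`
consists only of such jobs and has load at least `L`.

Consequently (`exists_partial_schedule`), before machine `k` is filled, for every `d` there is a
`t ≤ k` (the first machine after the last exhaustion for `d`) such that the unassigned jobs with
deadline at most `d` have total size at most `p(J(t,d)) - (k - t) L`. For `k = d + 1` the definition
of `L` makes this nonpositive, so no job misses its deadline. Finally, `L + P ≤ 2 L`, which is at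
most twice the makespan of any feasible schedule.
-/

noncomputable section

open Finset

/-- An RAI (restricted assignment with interval restrictions) instance:
machines `0,…,m-1` (with `m ≥ 1`), jobs `0,…,n-1`, positive real sizes,
and for each job an interval `[lo j, hi j]` of eligible machines. -/
structure RAI where
  m : ℕ
  hm : 0 < m
  n : ℕ
  p : Fin n → ℝ
  hp : ∀ j, 0 < p j
  lo : Fin n → Fin m
  hi : Fin n → Fin m
  hle : ∀ j, (lo j : ℕ) ≤ (hi j : ℕ)

namespace RAI

/-- Job `j` is eligible on machine `i`. -/
def eligible (I : RAI) (j : Fin I.n) (i : Fin I.m) : Prop :=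
  (I.lo j : ℕ) ≤ (i : ℕ) ∧ (i : ℕ) ≤ (I.hi j : ℕ)

/-- A schedule is feasible if every job is assigned to an eligible machine. -/
def feasible (I : RAI) (σ : Fin I.n → Fin I.m) : Prop :=
  ∀ j, I.eligible j (σ j)

/-- Load of machine `i` under schedule `σ`. -/
def load (I : RAI) (σ : Fin I.n → Fin I.m) (i : Fin I.m) : ℝ :=
  ∑ j ∈ Finset.univ.filter (fun j => σ j = i), I.p j

/-- Makespan: maximum machine load. -/
def makespan (I : RAI) (σ : Fin I.n → Fin I.m) : ℝ :=
  Finset.univ.sup' (Finset.univ_nonempty_iff.mpr ⟨⟨0, I.hm⟩⟩) (I.load σ)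

/-- `J(ℓ,r)`: jobs whose eligibility interval is contained in `{ℓ,…,r}`. -/
def intervalJobs (I : RAI) (ℓ r : ℕ) : Finset (Fin I.n) :=
  Finset.univ.filter (fun j => ℓ ≤ (I.lo j : ℕ) ∧ (I.hi j : ℕ) ≤ r)

/-- `M(ℓ,r)`: machines in `{ℓ,…,r}`. -/
def machInterval (I : RAI) (ℓ r : ℕ) : Finset (Fin I.m) :=
  Finset.univ.filter (fun i => ℓ ≤ (i : ℕ) ∧ (i : ℕ) ≤ r)

end RAI

namespace RAI

/-- Maximum job size (J nonempty). -/
def maxSize (I : RAI) (hJ : 0 < I.n) : ℝ :=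
  Finset.univ.sup' (Finset.univ_nonempty_iff.mpr ⟨⟨0, hJ⟩⟩) I.p

/-- Maximum over all intervals `ℓ ≤ r` of the average load `p(J(ℓ,r)) / (r-ℓ+1)`. -/
def avgBound (I : RAI) : ℝ :=
  (Finset.univ.filter (fun q : Fin I.m × Fin I.m => (q.1 : ℕ) ≤ (q.2 : ℕ))).sup'
    ⟨(⟨0, I.hm⟩, ⟨0, I.hm⟩), Finset.mem_filter.mpr ⟨Finset.mem_univ _, le_rfl⟩⟩
    (fun q => (∑ j ∈ I.intervalJobs (q.1 : ℕ) (q.2 : ℕ), I.p j) /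
      ((((q.2 : ℕ) - (q.1 : ℕ) + 1 : ℕ) : ℝ)))

/-- The lower bound `L`. -/
def Lbound (I : RAI) (hJ : 0 < I.n) : ℝ := max (I.maxSize hJ) I.avgBound

end RAI

/-- One greedy step: a deadline-closed subset of the available jobs `A`, maximal subject to load at
most `L + P`. -/
theorem exists_greedy_batch {α : Type*} [DecidableEq α] (A : Finset α) (p : α → ℝ) (key : α → ℕ)
    (L P : ℝ) (hL : 0 ≤ L) (hP : 0 ≤ P) (hpP : ∀ j, p j ≤ P) :
    ∃ S ⊆ A, ∑ j ∈ S, p j ≤ L + P ∧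
      ∀ d, (∀ j ∈ A, key j ≤ d → j ∈ S) ∨ ((∀ j ∈ S, key j ≤ d) ∧ L ≤ ∑ j ∈ S, p j) := by
  classical
  let F := A.powerset.filter (fun S =>
    (∀ j ∈ S, ∀ j' ∈ A, key j' < key j → j' ∈ S) ∧ ∑ j ∈ S, p j ≤ L + P)
  have hF : F.Nonempty := by
    refine ⟨∅, ?_⟩
    simp only [F, mem_filter, mem_powerset]
    exact ⟨by simp, by simp, by simpa using add_nonneg hL hP⟩
  obtain ⟨S, hS, hmax⟩ := F.exists_max_image card hF
  simp only [F, mem_filter, mem_powerset] at hS hmax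
  obtain ⟨hSA, hdown, hSL⟩ := hS
  refine ⟨S, hSA, hSL, fun d => ?_⟩
  by_cases h : ∀ j ∈ A, key j ≤ d → j ∈ S
  · exact Or.inl h
  right
  push Not at h
  obtain ⟨j₀, hj₀A, hj₀d, hj₀S⟩ := h
  refine ⟨fun j hj => ?_, ?_⟩
  · by_contra hlt
    exact hj₀S (hdown j hj j₀ hj₀A (by omega))
  · -- adding a missing job of least deadline keeps `S` deadline-closed, so it must exceed `L + P`
    obtain ⟨j₁, hj₁, hmin⟩ := (A \ S).exists_min_image key ⟨j₀, by simp [hj₀A, hj₀S]⟩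
    simp only [mem_sdiff] at hj₁ hmin
    by_contra hlt
    have := hmax (insert j₁ S) ⟨insert_subset hj₁.1 hSA, ?_, ?_⟩
    · rw [card_insert_of_notMem hj₁.2] at this
      omega
    · intro j hj j' hj' hk
      by_cases hj'S : j' ∈ S
      · exact mem_insert_of_mem hj'S
      · rcases mem_insert.1 hj with rfl | hjS
        · have := hmin j' ⟨hj', hj'S⟩
          omega
        · exact absurd (hdown j hjS j' hj' hk) hj'S
    · rw [sum_insert hj₁.2]
      linarith [hpP j₁]

namespace RAI

theorem le_maxSize (I : RAI) (hJ : 0 < I.n) (j : Fin I.n) : I.p j ≤ I.maxSize hJ :=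
  Finset.le_sup' I.p (mem_univ j)

theorem maxSize_nonneg (I : RAI) (hJ : 0 < I.n) : 0 ≤ I.maxSize hJ :=
  (I.hp ⟨0, hJ⟩).le.trans (I.le_maxSize hJ _)

theorem load_le_makespan (I : RAI) (σ : Fin I.n → Fin I.m) (i : Fin I.m) :
    I.load σ i ≤ I.makespan σ :=
  Finset.le_sup' (I.load σ) (mem_univ i)

theorem Lbound_le_makespan (I : RAI) (hJ : 0 < I.n) (σ : Fin I.n → Fin I.m) (hσ : I.feasible σ) :
    I.Lbound hJ ≤ I.makespan σ := by
  refine max_le (Finset.sup'_le _ _ fun j _ => ?_) (Finset.sup'_le _ _ fun q hq => ?_)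
  · refine le_trans ?_ (I.load_le_makespan σ (σ j))
    exact Finset.single_le_sum (f := I.p) (fun j _ => (I.hp j).le) (by simp)
  · obtain ⟨a, b⟩ := q
    simp only [mem_filter, mem_univ, true_and] at hq
    have hpos : (0 : ℝ) < (((b : ℕ) - (a : ℕ) + 1 : ℕ) : ℝ) := by positivity
    rw [div_le_iff₀ hpos]
    have hmaps : ∀ j ∈ I.intervalJobs a b, σ j ∈ Finset.Icc a b := by
      intro j hj
      simp only [intervalJobs, mem_filter, mem_univ, true_and] at hj
      have := hσ j
      unfold eligible at this
      rw [Finset.mem_Icc, Fin.le_def, Fin.le_def]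
      omega
    rw [← Finset.sum_fiberwise_of_maps_to hmaps]
    calc _ ≤ ∑ _i ∈ Finset.Icc a b, I.makespan σ := by
          refine Finset.sum_le_sum fun i _ => le_trans ?_ (I.load_le_makespan σ i)
          refine Finset.sum_le_sum_of_subset_of_nonneg ?_ fun j _ _ => (I.hp j).le
          exact Finset.filter_subset_filter _ (subset_univ _)
      _ = _ := by
          rw [Finset.sum_const, Fin.card_Icc, nsmul_eq_mul, mul_comm,
            show (b : ℕ) + 1 - a = b - a + 1 by omega]

/-- The case `t = d + 1` is included: then `J(t,d)` is empty because `lo j ≤ hi j`. -/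
theorem sum_intervalJobs_le (I : RAI) (hJ : 0 < I.n) (t d : ℕ) (htd : t ≤ d + 1) (hd : d < I.m) :
    ∑ j ∈ I.intervalJobs t d, I.p j ≤ ((d : ℝ) + 1 - t) * I.Lbound hJ := by
  rcases Nat.lt_or_ge d t with h | h
  · obtain rfl : t = d + 1 := by omega
    have : I.intervalJobs (d + 1) d = ∅ := by
      ext j
      have := I.hle j
      simp only [intervalJobs, mem_filter, mem_univ, true_and, notMem_empty, iff_false]
      omega
    simp [this]
  · have h1 := Finset.le_sup'
      (s := Finset.univ.filter (fun q : Fin I.m × Fin I.m => (q.1 : ℕ) ≤ (q.2 : ℕ)))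
      (fun q => (∑ j ∈ I.intervalJobs (q.1 : ℕ) (q.2 : ℕ), I.p j) /
        ((((q.2 : ℕ) - (q.1 : ℕ) + 1 : ℕ) : ℝ)))
      (b := (⟨t, by omega⟩, ⟨d, hd⟩)) (by simpa using h)
    have h2 := h1.trans (le_max_right (I.maxSize hJ) I.avgBound)
    have hpos : (0 : ℝ) < ((d - t + 1 : ℕ) : ℝ) := by positivity
    simp only at h2
    rw [div_le_iff₀ hpos] at h2
    refine h2.trans (le_of_eq ?_)
    push_cast [Nat.cast_sub h]
    unfold Lbound
    ring

/-- State of the greedy algorithm before machine `k` is filled: `U` is the set of unassigned jobs,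
and the values of `σ` on `U` are irrelevant. -/
theorem exists_partial_schedule (I : RAI) (hJ : 0 < I.n) (k : ℕ) (hk : k ≤ I.m) :
    ∃ (U : Finset (Fin I.n)) (σ : Fin I.n → Fin I.m),
      (∀ j ∉ U, I.eligible j (σ j) ∧ (σ j : ℕ) < k) ∧
      (∀ i, ∑ j ∈ Finset.univ.filter (fun j => j ∉ U ∧ σ j = i), I.p j
        ≤ I.Lbound hJ + I.maxSize hJ) ∧
      (∀ j ∈ U, k ≤ (I.hi j : ℕ)) ∧
      (∀ d : ℕ, ∃ t ≤ k, ∑ j ∈ U.filter (fun j => (I.hi j : ℕ) ≤ d), I.p j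
        + ((k : ℝ) - t) * I.Lbound hJ ≤ ∑ j ∈ I.intervalJobs t d, I.p j) := by
  have hP := I.maxSize_nonneg hJ
  have hL : 0 ≤ I.Lbound hJ := hP.trans (le_max_left _ _)
  induction k with
  | zero =>
    refine ⟨univ, I.lo, by simp, fun i => ?_, by simp, fun d => ⟨0, le_rfl, ?_⟩⟩
    · simpa using add_nonneg hL hP
    · simp [intervalJobs]
  | succ k ih =>
    obtain ⟨U, σ, hel, hload, hU, hinv⟩ := ih (by omega)
    obtain ⟨S, hSA, hSL, hS⟩ := exists_greedy_batch (U.filter fun j => (I.lo j : ℕ) ≤ k) I.p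
      (fun j => (I.hi j : ℕ)) (I.Lbound hJ) (I.maxSize hJ) hL hP (I.le_maxSize hJ)
    have hSU : ∀ j ∈ S, j ∈ U ∧ (I.lo j : ℕ) ≤ k := fun j hj => by simpa using hSA hj
    have hinv' : ∀ d : ℕ, ∃ t ≤ k + 1, ∑ j ∈ (U \ S).filter (fun j => (I.hi j : ℕ) ≤ d), I.p j
        + (((k + 1 : ℕ) : ℝ) - t) * I.Lbound hJ ≤ ∑ j ∈ I.intervalJobs t d, I.p j := by
      intro d
      rcases hS d with h | ⟨h, hle⟩
      · -- all released jobs with deadline at most `d` are assigned: restart at `t = k + 1`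
        refine ⟨k + 1, le_rfl, ?_⟩
        rw [sub_self, zero_mul, add_zero]
        refine Finset.sum_le_sum_of_subset_of_nonneg (fun j hj => ?_) fun j _ _ => (I.hp j).le
        simp only [mem_filter, mem_sdiff] at hj
        simp only [intervalJobs, mem_filter, mem_univ, true_and]
        refine ⟨?_, hj.2⟩
        by_contra hlo
        exact hj.1.2 (h j (by simp only [mem_filter]; exact ⟨hj.1.1, by omega⟩) hj.2)
      · obtain ⟨t, ht, hsum⟩ := hinv d
        refine ⟨t, by omega, ?_⟩
        have hsplit : (U \ S).filter (fun j => (I.hi j : ℕ) ≤ d)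
            = U.filter (fun j => (I.hi j : ℕ) ≤ d) \ S := by
          ext j
          simp only [mem_filter, mem_sdiff]
          tauto
        have hsub : S ⊆ U.filter (fun j => (I.hi j : ℕ) ≤ d) := fun j hj =>
          mem_filter.2 ⟨(hSU j hj).1, h j hj⟩
        have := Finset.sum_sdiff (f := I.p) hsub
        rw [hsplit]
        push_cast
        linarith
    refine ⟨U \ S, fun j => if j ∈ S then ⟨k, hk⟩ else σ j, ?_, ?_, ?_, hinv'⟩
    · intro j hj
      by_cases hjS : j ∈ S
      · simp only [hjS, if_true, eligible]
        exact ⟨⟨(hSU j hjS).2, hU j (hSU j hjS).1⟩, by omega⟩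
      · simp only [hjS, if_false]
        have := hel j (fun h => hj (mem_sdiff.2 ⟨h, hjS⟩))
        exact ⟨this.1, by omega⟩
    · intro i
      -- machine `k` was empty before and receives exactly `S`; the other loads are unchanged
      by_cases hi : i = ⟨k, hk⟩
      · refine le_trans (Finset.sum_le_sum_of_subset_of_nonneg (fun j hj => ?_)
          fun j _ _ => (I.hp j).le) hSL
        simp only [mem_filter, mem_univ, true_and, mem_sdiff] at hj
        by_contra hjS
        have h1 := hel j (fun h => hj.1 ⟨h, hjS⟩)
        have h2 := hj.2
        rw [if_neg hjS, hi] at h2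
        rw [h2] at h1
        exact lt_irrefl _ h1.2
      · refine le_trans (Finset.sum_le_sum_of_subset_of_nonneg (fun j hj => ?_)
          fun j _ _ => (I.hp j).le) (hload i)
        simp only [mem_filter, mem_univ, true_and, mem_sdiff] at hj ⊢
        by_cases hjS : j ∈ S
        · have h2 := hj.2
          rw [if_pos hjS] at h2
          exact absurd h2.symm hi
        · have h2 := hj.2
          rw [if_neg hjS] at h2
          exact ⟨fun h => hj.1 ⟨h, hjS⟩, h2⟩
    · intro j hj
      by_contra hlt
      -- the invariant with `d = k` leaves total size at most `0` for the jobs with deadline `≤ k`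
      obtain ⟨t, ht, hsum⟩ := hinv' k
      have hJ' := I.sum_intervalJobs_le hJ t k ht (by omega)
      have hpj : I.p j ≤ ∑ j ∈ (U \ S).filter (fun j => (I.hi j : ℕ) ≤ k), I.p j :=
        Finset.single_le_sum (f := I.p) (fun j _ => (I.hp j).le)
          (mem_filter.2 ⟨hj, by omega⟩)
      have := I.hp j
      push_cast at hsum
      linarith

theorem exists_schedule (I : RAI) (hJ : 0 < I.n) :
    ∃ σ, I.feasible σ ∧ ∀ i, I.load σ i ≤ I.Lbound hJ + I.maxSize hJ := by
  obtain ⟨U, σ, hel, hload, hU, -⟩ := I.exists_partial_schedule hJ I.m le_rfl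
  have hnot : ∀ j, j ∉ U := fun j hj => absurd (hU j hj) (by have := (I.hi j).2; omega)
  refine ⟨σ, fun j => (hel j (hnot j)).1, fun i => ?_⟩
  simpa [load, hnot] using hload i

end RAI

/-- `L` is a lower bound on the makespan of every feasible schedule;
there is a feasible schedule in which every machine has load at most `L + max p_j`;
in particular there is a feasible schedule whose makespan is at most twice optimal. -/
theorem statement0 (I : RAI) (hJ : 0 < I.n) :
    (∀ σ, I.feasible σ → I.Lbound hJ ≤ I.makespan σ) ∧
    (∃ σ, I.feasible σ ∧ ∀ i, I.load σ i ≤ I.Lbound hJ + I.maxSize hJ) ∧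
    (∃ σ, I.feasible σ ∧ ∀ τ, I.feasible τ → I.makespan σ ≤ 2 * I.makespan τ) := by
  obtain ⟨σ, hσ, hload⟩ := I.exists_schedule hJ
  refine ⟨I.Lbound_le_makespan hJ, ⟨σ, hσ, hload⟩, σ, hσ, fun τ hτ => ?_⟩
  have hτL := I.Lbound_le_makespan hJ τ hτ
  have hPL : I.maxSize hJ ≤ I.Lbound hJ := le_max_left _ _
  refine Finset.sup'_le _ _ fun i _ => ?_
  linarith [hload i]
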